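/- Consider a finite event trace (a list of events) satisfying: (i) the values of input watermark events are nondecreasing along the trace; (ii) the timestamps of first events are nondecreasing along the trace; (iii) every event first τ n precedes every input watermark event wm w with w > τ; and (iv) every next τ event is preceded by a first τ n event, and after every prefix the pending count pend(τ) = (sum of n − 1 over first τ n events in the prefix) − (number of next τ events in the prefix) is nonnegative. Then, in the output sequence produced by the algorithm of Listing 4 (an interleaving of forwarded tuples and forwarded watermarks), no forwarded tuple is a late arrival: every tuple forwarded after a forwarded watermark of value W has timestamp ≥ W. That is, the algorithm enforces condition C3 (Lemma 4). -/

import Mathlib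

/-- Events on the stream `S_{A₂}` carrying the outputs of the first Aggregate
`A₁` of the Unfold operator: `first τ n` is the first of `n` successor tuples
at timestamp `τ` output by `A₁` from one embedded tuple (announcing `n - 1`
further successors at `τ`), `next τ` is a further successor tuple at
timestamp `τ`, and `wm w` is an input watermark of value `w`. -/
inductive SA2Event : Type
  | first (τ n : ℕ)
  | next (τ : ℕ)
  | wm (w : ℕ)
deriving DecidableEq

/-- Pending count at timestamp `τ` after a prefix of events:
(sum of `n - 1` over `first τ n` events) − (number of `next τ` events). -/
def pendZ (pre : List SA2Event) (τ : ℕ) : ℤ :=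
  (pre.map (fun e =>
    match e with
    | .first τ' n => if τ' = τ then (n : ℤ) - 1 else 0
    | .next τ' => if τ' = τ then (-1 : ℤ) else 0
    | .wm _ => 0)).sum

/-- The input watermark values occurring in a trace, in order. -/
def wmValues (tr : List SA2Event) : List ℕ :=
  tr.filterMap (fun e => match e with | .wm w => some w | _ => none)

/-- The timestamps of the `first` events of a trace, in order. -/
def firstTimes (tr : List SA2Event) : List ℕ :=
  tr.filterMap (fun e => match e with | .first τ _ => some τ | _ => none)

/-- State of the algorithm of Listing 4: the pending successor counts (a key
is absent iff its count is `0`), the last forwarded watermark, and the output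
sequence produced so far — an interleaving of forwarded tuples (carrying
their timestamp, `Sum.inl τ`) and forwarded watermarks (`Sum.inr w`). -/
structure C3State where
  pend : ℕ → ℕ
  lastW : WithBot ℕ
  out : List (ℕ ⊕ ℕ)

open scoped Classical in
/-- Watermark-forwarding part of Listing 4: if all pending counts are zero,
forward the default value `dflt` as a watermark; otherwise, with `m` the
least timestamp with positive pending count, forward `m - 1` as a watermark
if `m - 1 > lastW`. -/
noncomputable def emitWm (s : C3State) (dflt : ℕ) : C3State :=
  if _ : ∃ t, 0 < s.pend t then
    let m := sInf {t | 0 < s.pend t}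
    if s.lastW < ((m - 1 : ℕ) : WithBot ℕ) then
      { s with out := s.out ++ [Sum.inr (m - 1)],
               lastW := ((m - 1 : ℕ) : WithBot ℕ) }
    else s
  else { s with out := s.out ++ [Sum.inr dflt], lastW := (dflt : WithBot ℕ) }

/-- One step of the algorithm of Listing 4: every tuple is forwarded
immediately upon reception; on `first τ n` the pending count at key `τ` is
increased by `n - 1`, on `next τ` it is decreased by `1` (the key is removed
when it reaches `0`); after forwarding a tuple with timestamp `τ` the
algorithm may forward a watermark (with default `τ`), and upon an input
watermark `wm w` it may forward a watermark (with default `w`). -/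
noncomputable def c3Step (s : C3State) (e : SA2Event) : C3State :=
  match e with
  | .first τ n =>
      emitWm { s with pend := Function.update s.pend τ (s.pend τ + (n - 1)),
                      out := s.out ++ [Sum.inl τ] } τ
  | .next τ =>
      emitWm { s with pend := Function.update s.pend τ (s.pend τ - 1),
                      out := s.out ++ [Sum.inl τ] } τ
  | .wm w => emitWm s w

/-- Running the algorithm of Listing 4 over a trace, starting with all
pending counts `0`, no forwarded watermark yet, and an empty output. -/
noncomputable def c3Run (tr : List SA2Event) : C3State :=
  tr.foldl c3Step ⟨fun _ => 0, ⊥, []⟩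

def NoLate (out : List (ℕ ⊕ ℕ)) : Prop :=
  out.Pairwise (fun a b => ∀ W τ, a = Sum.inr W → b = Sum.inl τ → W ≤ τ)

/-- Safety part of the invariant, relative to the remaining events. -/
def Safe (suf : List SA2Event) (s : C3State) : Prop :=
  (∀ W, Sum.inr W ∈ s.out → ∀ t, 0 < s.pend t → W ≤ t) ∧
  (∀ W, Sum.inr W ∈ s.out → ∀ τ n, SA2Event.first τ n ∈ suf → W ≤ τ) ∧
  NoLate s.out

theorem noLate_append_inr {out : List (ℕ ⊕ ℕ)} (h : NoLate out) (w : ℕ) :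
    NoLate (out ++ [Sum.inr w]) := by
  unfold NoLate at *
  rw [List.pairwise_append]
  refine ⟨h, by simp, ?_⟩
  intro a _ b hb W τ _ h2
  simp_all

theorem noLate_append_inl {out : List (ℕ ⊕ ℕ)} (h : NoLate out) (t : ℕ)
    (ht : ∀ W, Sum.inr W ∈ out → W ≤ t) :
    NoLate (out ++ [Sum.inl t]) := by
  unfold NoLate at *
  rw [List.pairwise_append]
  refine ⟨h, by simp, ?_⟩
  intro a ha b hb W τ h1 h2
  simp only [List.mem_singleton] at hb
  subst hb h1
  cases h2
  exact ht W ha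

theorem emitWm_pend (s : C3State) (d : ℕ) : (emitWm s d).pend = s.pend := by
  unfold emitWm
  dsimp only
  split_ifs <;> rfl

theorem emitWm_safe (suf : List SA2Event) (s : C3State) (d : ℕ) (h : Safe suf s)
    (hd : ∀ τ n, SA2Event.first τ n ∈ suf → d ≤ τ)
    (hp : ∀ t, 0 < s.pend t → ∀ τ n, SA2Event.first τ n ∈ suf → t ≤ τ) :
    Safe suf (emitWm s d) := by
  obtain ⟨h1, h2, h3⟩ := h
  unfold emitWm
  dsimp only
  split_ifs with hex hlt
  · have hm : 0 < s.pend (sInf {t | 0 < s.pend t}) := Nat.sInf_mem hex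
    have hle : ∀ t, 0 < s.pend t → sInf {t | 0 < s.pend t} ≤ t := fun t ht => Nat.sInf_le ht
    refine ⟨?_, ?_, noLate_append_inr h3 _⟩
    · intro W hW t ht
      simp only [List.mem_append, List.mem_singleton, Sum.inr.injEq] at hW
      rcases hW with hW | hW
      · exact h1 W hW t ht
      · have := hle t ht
        omega
    · intro W hW τ n hf
      simp only [List.mem_append, List.mem_singleton, Sum.inr.injEq] at hW
      rcases hW with hW | hW
      · exact h2 W hW τ n hf
      · have := hp _ hm τ n hf
        omega
  · exact ⟨h1, h2, h3⟩
  · refine ⟨?_, ?_, noLate_append_inr h3 _⟩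
    · intro W hW t ht
      exact absurd ⟨t, ht⟩ hex
    · intro W hW τ n hf
      simp only [List.mem_append, List.mem_singleton, Sum.inr.injEq] at hW
      rcases hW with hW | hW
      · exact h2 W hW τ n hf
      · exact hW ▸ hd τ n hf

theorem run_inv (trace : List SA2Event)
    (h_first_mono : ∀ pre suf, trace = pre ++ suf → ∀ a b n m,
      SA2Event.first a n ∈ pre → SA2Event.first b m ∈ suf → a ≤ b)
    (h_first_before_wm : ∀ (l₁ l₂ rest : List SA2Event) (w τ n : ℕ),
      trace = l₁ ++ SA2Event.wm w :: l₂ ++ SA2Event.first τ n :: rest → w ≤ τ)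
    (h_next_after_first : ∀ (l₁ rest : List SA2Event) (τ : ℕ),
      trace = l₁ ++ SA2Event.next τ :: rest → ∃ n, SA2Event.first τ n ∈ l₁)
    (h_pend_nonneg : ∀ pre, pre <+: trace → ∀ τ, 0 ≤ pendZ pre τ)
    (pre : List SA2Event) : ∀ suf, trace = pre ++ suf →
      (∀ t, pendZ pre t ≤ (c3Run pre).pend t) ∧
      (∀ t, 0 < (c3Run pre).pend t → ∃ n, SA2Event.first t n ∈ pre) ∧
      Safe suf (c3Run pre) := by
  induction pre using List.reverseRecOn with
  | nil =>
    intro suf _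
    simp [c3Run, pendZ, Safe, NoLate]
  | append_singleton pre e ih =>
    intro suf htr
    have htr' : trace = pre ++ e :: suf := by simpa using htr
    obtain ⟨i1, i2, i3, i4, i5⟩ := ih _ htr'
    have hrun : c3Run (pre ++ [e]) = c3Step (c3Run pre) e := by simp [c3Run]
    have hnn := h_pend_nonneg (pre ++ [e]) ⟨suf, htr.symm⟩
    have hmono := h_first_mono _ _ htr
    rw [hrun]
    generalize c3Run pre = s at *
    cases e with
    | first τ n =>
      have j4 : ∀ W, Sum.inr W ∈ s.out → W ≤ τ := fun W hW => i4 W hW τ n (by simp)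
      have hpos : ∀ t, 0 < Function.update s.pend τ (s.pend τ + (n - 1)) t →
          t = τ ∨ 0 < s.pend t := by
        intro t ht
        by_cases h : t = τ
        · exact Or.inl h
        · right; simpa [Function.update_of_ne h] using ht
      have hmem : ∀ t, 0 < Function.update s.pend τ (s.pend τ + (n - 1)) t →
          ∃ k, SA2Event.first t k ∈ pre ++ [SA2Event.first τ n] := by
        intro t ht
        rcases hpos t ht with rfl | h
        · exact ⟨n, by simp⟩
        · obtain ⟨k, hk⟩ := i2 t h
          exact ⟨k, by simp [hk]⟩
      simp only [c3Step, emitWm_pend]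
      refine ⟨?_, hmem, emitWm_safe _ _ _ ⟨?_, ?_, noLate_append_inl i5 _ j4⟩ ?_ ?_⟩
      · intro t
        have := i1 t
        by_cases h : t = τ
        · subst h
          simp [pendZ] at this ⊢
          omega
        · have h' : τ ≠ t := fun x => h x.symm
          simpa [pendZ, Function.update_of_ne h, h'] using this
      · intro W hW t ht
        have hW2 : Sum.inr W ∈ s.out := by simpa using hW
        rcases hpos t ht with rfl | h
        · exact j4 W hW2
        · exact i3 W hW2 t h
      · intro W hW t k hk
        exact i4 W (by simpa using hW) t k (by simp [hk])
      · intro t k hk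
        exact hmono _ _ n k (by simp) hk
      · intro t ht a k hk
        obtain ⟨q, hq⟩ := hmem t ht
        exact hmono _ _ q k hq hk
    | next τ =>
      obtain ⟨n, hn⟩ := h_next_after_first _ _ _ htr'
      have hτ : 0 < s.pend τ := by
        have h1 := hnn τ
        have h2 := i1 τ
        simp [pendZ] at h1 h2
        omega
      have j4 : ∀ W, Sum.inr W ∈ s.out → W ≤ τ := fun W hW => i3 W hW τ hτ
      have hpos : ∀ t, 0 < Function.update s.pend τ (s.pend τ - 1) t → 0 < s.pend t := by
        intro t ht
        by_cases h : t = τ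
        · exact h ▸ hτ
        · simpa [Function.update_of_ne h] using ht
      have hmem : ∀ t, 0 < Function.update s.pend τ (s.pend τ - 1) t →
          ∃ k, SA2Event.first t k ∈ pre ++ [SA2Event.next τ] := by
        intro t ht
        obtain ⟨k, hk⟩ := i2 t (hpos t ht)
        exact ⟨k, by simp [hk]⟩
      simp only [c3Step, emitWm_pend]
      refine ⟨?_, hmem, emitWm_safe _ _ _ ⟨?_, ?_, noLate_append_inl i5 _ j4⟩ ?_ ?_⟩
      · intro t
        have := i1 t
        by_cases h : t = τ
        · subst h
          simp [pendZ] at this ⊢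
          omega
        · have h' : τ ≠ t := fun x => h x.symm
          simpa [pendZ, Function.update_of_ne h, h'] using this
      · intro W hW t ht
        exact i3 W (by simpa using hW) t (hpos t ht)
      · intro W hW t k hk
        exact i4 W (by simpa using hW) t k (by simp [hk])
      · intro t k hk
        exact hmono _ _ n k (by simp [hn]) hk
      · intro t ht a k hk
        obtain ⟨q, hq⟩ := hmem t ht
        exact hmono _ _ q k hq hk
    | wm w =>
      have hmem : ∀ t, 0 < s.pend t →
          ∃ k, SA2Event.first t k ∈ pre ++ [SA2Event.wm w] := by
        intro t ht
        obtain ⟨k, hk⟩ := i2 t ht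
        exact ⟨k, by simp [hk]⟩
      simp only [c3Step, emitWm_pend]
      refine ⟨?_, hmem, emitWm_safe _ _ _ ⟨i3, ?_, i5⟩ ?_ ?_⟩
      · intro t
        simpa [pendZ] using i1 t
      · intro W hW t k hk
        exact i4 W hW t k (by simp [hk])
      · intro t k hk
        obtain ⟨a, b, rfl⟩ := List.append_of_mem hk
        exact h_first_before_wm pre a b w t k (by simpa using htr')
      · intro t ht a k hk
        obtain ⟨q, hq⟩ := hmem t ht
        exact hmono _ _ q k hq hk

/-- Lemma 4: over any trace in which (i) input watermark values are
nondecreasing, (ii) the timestamps of `first` events are nondecreasing,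
(iii) every `first τ n` event precedes every input watermark `wm w` with
`w > τ`, and (iv) every `next τ` event is preceded by a `first τ n` event and
all pending counts stay nonnegative after every prefix, the output sequence
produced by the algorithm of Listing 4 contains no late arrival: every tuple
forwarded after a forwarded watermark of value `W` has timestamp `≥ W`
(condition C3). -/
theorem listing4_enforces_C3 (trace : List SA2Event)
    (h_wm_mono : (wmValues trace).Pairwise (· ≤ ·))
    (h_first_mono : (firstTimes trace).Pairwise (· ≤ ·))
    (h_first_before_wm : ∀ (l₁ l₂ rest : List SA2Event) (w τ n : ℕ),
      trace = l₁ ++ SA2Event.wm w :: l₂ ++ SA2Event.first τ n :: rest → w ≤ τ)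
    (h_next_after_first : ∀ (l₁ rest : List SA2Event) (τ : ℕ),
      trace = l₁ ++ SA2Event.next τ :: rest → ∃ n, SA2Event.first τ n ∈ l₁)
    (h_pend_nonneg : ∀ pre, pre <+: trace → ∀ τ, 0 ≤ pendZ pre τ) :
    ∀ (o₁ o₂ rest : List (ℕ ⊕ ℕ)) (W τ : ℕ),
      (c3Run trace).out = o₁ ++ Sum.inr W :: o₂ ++ Sum.inl τ :: rest →
        W ≤ τ := by
  have hm : ∀ pre suf, trace = pre ++ suf → ∀ a b n m,
      SA2Event.first a n ∈ pre → SA2Event.first b m ∈ suf → a ≤ b := by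
    intro pre suf htr a b n m ha hb
    subst htr
    unfold firstTimes at h_first_mono
    rw [List.filterMap_append, List.pairwise_append] at h_first_mono
    exact h_first_mono.2.2 a (List.mem_filterMap.2 ⟨_, ha, rfl⟩) b
      (List.mem_filterMap.2 ⟨_, hb, rfl⟩)
  obtain ⟨-, -, -, -, h⟩ := run_inv trace hm h_first_before_wm h_next_after_first
    h_pend_nonneg trace [] (by simp)
  intro o₁ o₂ rest W τ hout
  rw [NoLate, hout, List.pairwise_append] at h
  exact h.2.2 (Sum.inr W) (by simp) (Sum.inl τ) (by simp) W τ rfl rfl
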